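/- Let B ∈ ℤ^{n×2} be of rank 2 with columns B_1, B_2, such that ℤB is a positive lattice and the rows of B meet all four open quadrants of ℝ². Let C∘ be the fiber of ℤ^n/ℤB containing (B_1)_+ + (B_2)_+. Then β_{3,C∘}(k[x]/I_{ℤB}) > 0; consequently k[x]/I_{ℤB} is not Cohen–Macaulay. -/

import Mathlib

/-!
The fiber `C∘` has exactly four coordinatewise nonnegative points, the *corners*
`(B₁)_± + (B₂)_±` (`fiber_coords`). Sort the variables into four classes according to the signs
of the entries of their row of `B` (`quadrant`). Each corner vanishes on exactly one of the classes
and is positive on chosen rows `i r` from the three others. Thus `Δ_{C∘}` is, up to homotopy, the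
boundary of a tetrahedron, and the class in `Tor₃` sought here is its fundamental class. The proof
constructs this class by a diagram chase in a given free resolution `F`, without homology.

*Ascent* (`exists_top_syzygy`). Put `y q = X (i q)` and let `m q` be the monomial of
corner `q` divided by `∏_{r ≠ q} y r`. All `y r * m q - y q * m r` lie in the lattice
ideal, so they lift to elements `w ∈ F₁`; Koszul combinations of these lift to four elements
`t ∈ F₂`, and one combination of those lifts to `s ∈ F₃`. If `F` is graded, every lift can be
chosen homogeneous, and `s` has degree `C∘`.

*Descent* (`descent`). Let `kill q` set the variables of class `q` to zero. These are four
commuting idempotent ring endomorphisms, whose composition takes a polynomial to its constant term.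
If all entries of `s` had zero constant term, `s` would be a sum of four vectors with entries in
the four kernels. Going back down, the exactness of the complex formed by the intersections of
these kernels (`exists_pairs`, `exists_triples`) yields a polynomial `f` that lies in all four
kernels and is congruent to the monomial of corner `0` modulo the lattice ideal. The sum of the
coefficients in degree `C∘` vanishes on the lattice ideal (`eval_homPart_of_mem`), and it vanishes
on `f`, as every monomial of degree `C∘` misses some class (`exists_missed_quadrant`); but it is
`1` on the monomial of corner `0`, a contradiction.

So some entry `s g` has a nonzero constant term. In the graded case this forces `deg g = C∘`.
Applied with the trivial grading to a resolution of length `2`, the same argument produces an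
element of the empty index set of `F₃`, so the quotient is not Cohen–Macaulay.
-/

open MvPolynomial

section LatticeDefs

variable {V κ : Type*}

/-- The exponent vector of the positive part `u₊` of an integer vector `u`. -/
noncomputable def posExp [Fintype V] (u : V → ℤ) : V →₀ ℕ :=
  Finsupp.equivFunOnFinite.symm fun i => (u i).toNat

/-- The exponent vector of the negative part `u₋` of an integer vector `u`. -/
noncomputable def negExp [Fintype V] (u : V → ℤ) : V →₀ ℕ :=
  Finsupp.equivFunOnFinite.symm fun i => (-u i).toNat

/-- The binomial `x^{u₊} - x^{u₋}` associated to an integer vector `u`. -/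
noncomputable def latticeBinomial (k : Type*) [CommRing k] [Fintype V] (u : V → ℤ) :
    MvPolynomial V k :=
  monomial (posExp u) (1 : k) - monomial (negExp u) (1 : k)

/-- The lattice ideal `I_L = ⟨x^{u₊} - x^{u₋} : u ∈ L⟩` of a lattice `L ⊆ ℤ^V`. -/
noncomputable def latticeIdeal (k : Type*) [CommRing k] [Fintype V]
    (L : Submodule ℤ (V → ℤ)) : Ideal (MvPolynomial V k) :=
  Ideal.span {p | ∃ u ∈ L, p = latticeBinomial k u}

/-- A lattice `L ⊆ ℤ^V` is positive if `L ∩ ℕ^V = {0}`. -/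
def IsPositiveLattice (L : Submodule ℤ (V → ℤ)) : Prop :=
  ∀ u ∈ L, (∀ i, 0 ≤ u i) → u = 0

/-- The rank of a lattice. -/
noncomputable def latticeRank (L : Submodule ℤ (V → ℤ)) : ℕ :=
  Module.finrank ℤ L

/-- The lattice `ℤB` spanned by the columns of an integer matrix `B`. -/
def colSpan [Fintype κ] (B : Matrix V κ ℤ) : Submodule ℤ (V → ℤ) :=
  LinearMap.range B.mulVecLin

/-- The ideal `I` can be generated by `m` elements (`I` is a complete intersection when
`m` is the codimension of `I`). -/
def IsCI {R : Type*} [CommRing R] (I : Ideal R) (m : ℕ) : Prop :=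
  ∃ f : Fin m → R, Ideal.span (Set.range f) = I

/-- A matrix is mixed if every column contains a strictly positive and a strictly
negative entry. -/
def Mixed (B : Matrix V κ ℤ) : Prop :=
  ∀ j, (∃ i, 0 < B i j) ∧ (∃ i, B i j < 0)

/-- A matrix is dominating if it contains no square mixed submatrices. -/
def Dominating {a b : ℕ} (B : Matrix (Fin a) (Fin b) ℤ) : Prop :=
  ∀ s : ℕ, s ≠ 0 → ∀ (r : Fin s → Fin a) (c : Fin s → Fin b),
    Function.Injective r → Function.Injective c → ¬ Mixed (B.submatrix r c)

/-- The columns of `B` form a `ℤ`-basis of the lattice `L` (so that the rows of `B`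
are a Gale diagram of `L`). -/
def IsLatticeBasis {n m : ℕ} (L : Submodule ℤ (Fin n → ℤ)) (B : Matrix (Fin n) (Fin m) ℤ) :
    Prop :=
  LinearIndependent ℤ (fun j : Fin m => fun i => B i j) ∧ colSpan B = L

/-- The Gale diagram given by the rows of `B` is imbalanced: each row has `b_{i1} = 0`
or `b_{i2} ≥ 0`. -/
def Imbalanced {n : ℕ} (B : Matrix (Fin n) (Fin 2) ℤ) : Prop :=
  ∀ i, B i 0 = 0 ∨ 0 ≤ B i 1

/-- The rows of `B` meet all four open quadrants of `ℝ²`. -/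
def MeetsFourQuadrants {n : ℕ} (B : Matrix (Fin n) (Fin 2) ℤ) : Prop :=
  (∃ i, 0 < B i 0 ∧ 0 < B i 1) ∧ (∃ i, 0 < B i 0 ∧ B i 1 < 0) ∧
    (∃ i, B i 0 < 0 ∧ 0 < B i 1) ∧ (∃ i, B i 0 < 0 ∧ B i 1 < 0)

/-- The saturation `L^sat = {u : m • u ∈ L for some positive integer m}` of a lattice. -/
noncomputable def saturation (L : Submodule ℤ (V → ℤ)) : Submodule ℤ (V → ℤ) where
  carrier := {u | ∃ m : ℕ, 0 < m ∧ (m : ℤ) • u ∈ L}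
  zero_mem' := ⟨1, one_pos, by simp⟩
  add_mem' := by
    rintro a b ⟨p, hp, hpa⟩ ⟨q, hq, hqb⟩
    refine ⟨p * q, Nat.mul_pos hp hq, ?_⟩
    have ha : ((p * q : ℕ) : ℤ) • a ∈ L := by
      have h : ((p * q : ℕ) : ℤ) • a = (q : ℤ) • ((p : ℤ) • a) := by
        rw [smul_smul]; push_cast; rw [mul_comm]
      rw [h]; exact L.smul_mem _ hpa
    have hb : ((p * q : ℕ) : ℤ) • b ∈ L := by
      have h : ((p * q : ℕ) : ℤ) • b = (p : ℤ) • ((q : ℤ) • b) := by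
        rw [smul_smul]; push_cast; ring_nf
      rw [h]; exact L.smul_mem _ hqb
    rw [smul_add]
    exact L.add_mem ha hb
  smul_mem' := by
    rintro c a ⟨p, hp, hpa⟩
    exact ⟨p, hp, by rw [smul_comm]; exact L.smul_mem _ hpa⟩

/-- The data `(σ, A, p)` of a finite free resolution of `k[x]/I`:
`⋯ → k[x]^{σ(j+1)} --A j--> k[x]^{σ j} → ⋯ → k[x]^{σ 0} --v ↦ Σ v g * p g--> k[x]/I → 0`
is exact. -/
def IsFreeResolution (k : Type*) [Field k] [Fintype V]
    (I : Ideal (MvPolynomial V k)) (σ : ℕ → Type) [∀ j, Fintype (σ j)]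
    (A : ∀ j, Matrix (σ j) (σ (j + 1)) (MvPolynomial V k))
    (p : σ 0 → MvPolynomial V k) : Prop :=
  Ideal.span (Set.range p) ⊔ I = ⊤ ∧
    (∀ v : σ 0 → MvPolynomial V k,
      (∑ g, v g * p g) ∈ I ↔ v ∈ LinearMap.range (A 0).mulVecLin) ∧
    ∀ j, LinearMap.ker (A j).mulVecLin = LinearMap.range (A (j + 1)).mulVecLin

/-- `k[x]/I` admits a free resolution of length at most `m`. -/
def HasFreeResolutionOfLength (k : Type*) [Field k] [Fintype V]
    (I : Ideal (MvPolynomial V k)) (m : ℕ) : Prop :=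
  ∃ (σ : ℕ → Type) (hfin : ∀ j, Fintype (σ j))
    (A : ∀ j, Matrix (σ j) (σ (j + 1)) (MvPolynomial V k))
    (p : σ 0 → MvPolynomial V k),
    (∀ j, m < j → IsEmpty (σ j)) ∧ @IsFreeResolution V k _ _ I σ hfin A p

/-- Cohen–Macaulayness of `k[x]/I_L` for a positive lattice `L`, via the
Auslander–Buchsbaum characterization: the quotient is Cohen–Macaulay if and only if its
projective dimension over `k[x]` equals the codimension `rank L` of `I_L`, i.e. iff it
admits a free resolution of length `rank L`. -/
def IsCMLatticeQuotient (k : Type*) [Field k] [Fintype V]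
    (L : Submodule ℤ (V → ℤ)) : Prop :=
  HasFreeResolutionOfLength k (latticeIdeal k L) (latticeRank L)

/-- The degree in `Γ = ℤ^V/L` of the monomial with exponent vector `u`. -/
noncomputable def degQ [Fintype V] (L : Submodule ℤ (V → ℤ)) (u : V →₀ ℕ) :
    (V → ℤ) ⧸ L :=
  Submodule.Quotient.mk fun i => (u i : ℤ)

/-- The data `(σ, deg, A, p)` is a minimal free resolution of `k[x]/I_L`, graded by
`Γ = ℤ^V/L`: a free resolution in which all differentials (and the augmentation) are
homogeneous for the degrees `deg` of the generators and have entries with zero constant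
term.  The `Γ`-graded Betti number `β_{j,C}` of `k[x]/I_L` is then the number of
generators `g : σ j` with `deg j g = C`. -/
def IsMinimalGradedFreeResolution (k : Type*) [Field k] [Fintype V]
    (L : Submodule ℤ (V → ℤ)) (σ : ℕ → Type) [∀ j, Fintype (σ j)]
    (deg : ∀ j, σ j → ((V → ℤ) ⧸ L))
    (A : ∀ j, Matrix (σ j) (σ (j + 1)) (MvPolynomial V k))
    (p : σ 0 → MvPolynomial V k) : Prop :=
  IsFreeResolution k (latticeIdeal k L) σ A p ∧
    (∀ g, ∀ u ∈ (p g).support, degQ L u = deg 0 g) ∧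
    (∀ j g f, ∀ u ∈ (A j g f).support, degQ L u + deg j g = deg (j + 1) f) ∧
    ∀ j g f, MvPolynomial.coeff 0 (A j g f) = 0

/-- `F` is a face of the simplicial complex `Δ_C` attached to the fiber `C = c + L`:
the fiber contains a coordinatewise nonnegative vector whose support contains `F`. -/
def FaceOf (L : Submodule ℤ (V → ℤ)) (c : V → ℤ) (F : Finset V) : Prop :=
  ∃ a : V → ℤ, (∀ i, 0 ≤ a i) ∧ a - c ∈ L ∧ ∀ i ∈ F, a i ≠ 0

/-- The simplicial boundary matrix of the complex whose faces are given by `P`, from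
chains on `(d+1)`-element faces to chains on `d`-element faces. -/
noncomputable def boundaryMatrix (k : Type*) [Field k] [LinearOrder V]
    (P : Finset V → Prop) (d : ℕ) :
    Matrix {F : Finset V // P F ∧ F.card = d} {F : Finset V // P F ∧ F.card = d + 1} k :=
  fun G F =>
    if G.1 ⊆ F.1 then
      ∑ i ∈ F.1 \ G.1, (-1 : k) ^ (F.1.filter fun x => x < i).card
    else 0

/-- The rank of the `j`-th reduced simplicial homology, with coefficients in `k`, of the
simplicial complex whose faces are given by `P`:
`dim ker ∂_j - dim im ∂_{j+1}` where chains in homological degree `j` live on faces with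
`j+1` elements. -/
noncomputable def reducedHomologyRank (k : Type*) [Field k] [Fintype V] [LinearOrder V]
    (P : Finset V → Prop) (j : ℕ) : ℕ :=
  letI : Fintype {F : Finset V // P F ∧ F.card = j + 1} := Fintype.ofFinite _
  letI : Fintype {F : Finset V // P F ∧ F.card = j + 1 + 1} := Fintype.ofFinite _
  Fintype.card {F : Finset V // P F ∧ F.card = j + 1} -
    (boundaryMatrix k P j).rank - (boundaryMatrix k P (j + 1)).rank

end LatticeDefs

/-! ### Homogeneous parts and homogeneous lifts -/

section Graded

variable {k : Type*} [Field k] {V : Type*} {Γ : Type*} [AddCommGroup Γ]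

open Classical in
/-- The component of degree `D` of a polynomial, for the grading in which the monomial with
exponent vector `u` has degree `dg u`. -/
noncomputable def homPart (dg : (V →₀ ℕ) →+ Γ) (D : Γ) (f : MvPolynomial V k) :
    MvPolynomial V k :=
  ∑ u ∈ f.support with dg u = D, monomial u (coeff u f)

open Classical in
theorem coeff_homPart (dg : (V →₀ ℕ) →+ Γ) (D : Γ) (f : MvPolynomial V k) (u : V →₀ ℕ) :
    coeff u (homPart dg D f) = if dg u = D then coeff u f else 0 := by
  simp only [homPart, coeff_sum, coeff_monomial, Finset.sum_ite_eq', Finset.mem_filter,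
    mem_support_iff]
  by_cases h : dg u = D <;> by_cases h' : coeff u f = 0 <;> simp [h, h']

/-- The vector `v` is homogeneous of degree `D` in the free module whose basis vector with index
`g` has degree `deg g`. The zero vector is homogeneous of every degree. -/
def IsHomVec (dg : (V →₀ ℕ) →+ Γ) {τ : Type*} (deg : τ → Γ) (D : Γ)
    (v : τ → MvPolynomial V k) : Prop :=
  ∀ g, ∀ u ∈ (v g).support, dg u + deg g = D

/-- Multiplication by a homogeneous polynomial of degree `a` shifts degrees by `a`. -/
theorem homPart_mul (dg : (V →₀ ℕ) →+ Γ) (a D : Γ) (f r : MvPolynomial V k)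
    (hf : ∀ u ∈ f.support, dg u = a) :
    homPart dg (a + D) (f * r) = f * homPart dg D r := by
  classical
  ext u
  rw [coeff_homPart, coeff_mul, coeff_mul]
  split_ifs with h
  · refine Finset.sum_congr rfl fun x hx => ?_
    by_cases h0 : coeff x.1 f = 0
    · simp [h0]
    · have h1 := hf _ (mem_support_iff.2 h0)
      rw [← Finset.HasAntidiagonal.mem_antidiagonal.1 hx, map_add, h1] at h
      rw [coeff_homPart, if_pos (add_left_cancel h)]
  · symm
    refine Finset.sum_eq_zero fun x hx => ?_
    by_cases h0 : coeff x.1 f = 0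
    · simp [h0]
    · have h1 := hf _ (mem_support_iff.2 h0)
      rw [← Finset.HasAntidiagonal.mem_antidiagonal.1 hx, map_add, h1] at h
      rw [coeff_homPart, if_neg (fun h' => h (by rw [h'])), mul_zero]

theorem homPart_sum (dg : (V →₀ ℕ) →+ Γ) (D : Γ) {τ : Type*} (s : Finset τ)
    (f : τ → MvPolynomial V k) :
    homPart dg D (∑ g ∈ s, f g) = ∑ g ∈ s, homPart dg D (f g) := by
  classical
  ext u
  simp only [coeff_sum, coeff_homPart]
  split_ifs <;> simp

theorem homPart_sub (dg : (V →₀ ℕ) →+ Γ) (D : Γ)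
    (f g : MvPolynomial V k) : homPart dg D (f - g) = homPart dg D f - homPart dg D g := by
  classical
  ext u
  simp only [coeff_sub, coeff_homPart]
  split_ifs <;> simp

theorem homPart_eq_self (dg : (V →₀ ℕ) →+ Γ) (D : Γ) (f : MvPolynomial V k)
    (hf : ∀ u ∈ f.support, dg u = D) : homPart dg D f = f := by
  classical
  ext u
  rw [coeff_homPart]
  split_ifs with h
  · rfl
  · by_contra h0
    exact h (hf u (mem_support_iff.2 (Ne.symm h0)))

/-- A homogeneous element of the image of a homogeneous matrix has a homogeneous preimage of the
same degree: take the components of that degree of an arbitrary preimage. -/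
theorem exists_isHomVec_lift (dg : (V →₀ ℕ) →+ Γ) {τ τ' : Type*} [Fintype τ']
    (deg : τ → Γ) (deg' : τ' → Γ) (A : Matrix τ τ' (MvPolynomial V k))
    (hA : ∀ g f, ∀ u ∈ (A g f).support, dg u + deg g = deg' f) (D : Γ)
    (v : τ → MvPolynomial V k) (hv : IsHomVec dg deg D v)
    (hr : v ∈ LinearMap.range A.mulVecLin) :
    ∃ w, A.mulVec w = v ∧ IsHomVec dg deg' D w := by
  classical
  obtain ⟨w, rfl⟩ := hr
  refine ⟨fun f => homPart dg (D - deg' f) (w f), ?_, ?_⟩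
  · funext g
    have h := homPart_eq_self dg (D - deg g) (A.mulVecLin w g)
      (fun u hu => by rw [← hv g u hu]; abel)
    rw [← h]
    simp only [Matrix.mulVecLin_apply, Matrix.mulVec, dotProduct, homPart_sum]
    refine Finset.sum_congr rfl fun f _ => ?_
    rw [← homPart_mul dg (deg' f - deg g) _ _ _ (fun u hu => by rw [← hA g f u hu]; abel)]
    congr 1
    abel
  · intro f u hu
    rw [mem_support_iff, coeff_homPart] at hu
    split_ifs at hu with h
    · rw [h]; abel
    · exact absurd rfl hu

theorem IsHomVec.add {dg : (V →₀ ℕ) →+ Γ} {τ : Type*} {deg : τ → Γ} {D : Γ}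
    {v w : τ → MvPolynomial V k} (hv : IsHomVec dg deg D v) (hw : IsHomVec dg deg D w) :
    IsHomVec dg deg D (v + w) := by
  classical
  intro g u hu
  rcases Finset.mem_union.1 (support_add hu) with h | h
  · exact hv g u h
  · exact hw g u h

theorem IsHomVec.neg {dg : (V →₀ ℕ) →+ Γ} {τ : Type*} {deg : τ → Γ} {D : Γ}
    {v : τ → MvPolynomial V k} (hv : IsHomVec dg deg D v) : IsHomVec dg deg D (-v) := by
  intro g u hu
  rw [Pi.neg_apply, support_neg] at hu
  exact hv g u hu

theorem IsHomVec.sub {dg : (V →₀ ℕ) →+ Γ} {τ : Type*} {deg : τ → Γ} {D : Γ}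
    {v w : τ → MvPolynomial V k} (hv : IsHomVec dg deg D v) (hw : IsHomVec dg deg D w) :
    IsHomVec dg deg D (v - w) := by
  rw [sub_eq_add_neg]
  exact hv.add hw.neg

theorem IsHomVec.monomial_smul {dg : (V →₀ ℕ) →+ Γ} {τ : Type*} {deg : τ → Γ} {D D' : Γ}
    {v : τ → MvPolynomial V k} (hv : IsHomVec dg deg D v) (e : V →₀ ℕ)
    (h : dg e + D = D') : IsHomVec dg deg D' (monomial e (1 : k) • v) := by
  classical
  intro g u hu
  obtain ⟨a, ha, b, hb, rfl⟩ := Finset.mem_add.1 (support_mul _ _ hu)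
  rw [Finset.mem_singleton.1 (support_monomial_subset ha), map_add, ← h, ← hv g b hb]
  abel

/-- If the `p g` generate the unit ideal modulo `I`, then `1` has a preimage modulo `I` under the
augmentation `v ↦ ∑ g, v g * p g`. -/
theorem exists_augmentation {τ : Type*} [Fintype τ] (I : Ideal (MvPolynomial V k))
    (p : τ → MvPolynomial V k) (h : Ideal.span (Set.range p) ⊔ I = ⊤) :
    ∃ v : τ → MvPolynomial V k, ∑ g, v g * p g - 1 ∈ I := by
  have h1 : (1 : MvPolynomial V k) ∈ Ideal.span (Set.range p) ⊔ I := by rw [h]; trivial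
  obtain ⟨a, ha, b, hb, hab⟩ := Submodule.mem_sup.1 h1
  obtain ⟨v, hv⟩ := Ideal.mem_span_range_iff_exists_fun.1 ha
  refine ⟨v, ?_⟩
  rw [hv, ← hab, sub_add_cancel_left]
  exact I.neg_mem hb

end Graded

/-! ### Exactness for four commuting idempotents -/

section Idem

variable {M : Type*} [AddCommGroup M] (π : Fin 4 → M →+ M)

/-- For commuting idempotents `π q`, the complex
`⨁_{q < r} (ker π q ⊓ ker π r) → ⨁_q ker π q → M` with Koszul signs is exact in the middle. -/
theorem exists_pairs (hi : ∀ q x, π q (π q x) = π q x) (hc : ∀ q r x, π q (π r x) = π r (π q x))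
    (b0 b1 b2 b3 : M) (h0 : π 0 b0 = 0) (h1 : π 1 b1 = 0) (h2 : π 2 b2 = 0) (h3 : π 3 b3 = 0)
    (hs : b0 + b1 + b2 + b3 = 0) :
    ∃ c01 c02 c03 c12 c13 c23 : M,
      (π 0 c01 = 0 ∧ π 1 c01 = 0) ∧ (π 0 c02 = 0 ∧ π 2 c02 = 0) ∧
      (π 0 c03 = 0 ∧ π 3 c03 = 0) ∧ (π 1 c12 = 0 ∧ π 2 c12 = 0) ∧
      (π 1 c13 = 0 ∧ π 3 c13 = 0) ∧ (π 2 c23 = 0 ∧ π 3 c23 = 0) ∧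
      b0 = -(c01 + c02 + c03) ∧ b1 = c01 - c12 - c13 ∧
      b2 = c02 + c12 - c23 ∧ b3 = c03 + c13 + c23 := by
  have e0 : π 3 (π 2 (π 1 b0)) = 0 := by
    have : b0 = -(b1 + b2 + b3) := by rw [eq_neg_iff_add_eq_zero, ← hs]; abel
    rw [this]
    simp only [map_neg, map_add]
    rw [h1, hc 2 1 b2, h2, hc 2 1 b3, hc 3 1 (π 2 b3), hc 3 2 b3, h3]
    simp
  have e1 : π 3 (π 2 (b0 - π 1 b0 + b1)) = 0 := by
    have : b0 - π 1 b0 + b1 = -(b2 + b3) - π 1 b0 := by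
      rw [← sub_eq_zero, ← hs]; abel
    rw [this]
    simp only [map_neg, map_sub, map_add]
    rw [e0, h2, hc 3 2, h3]
    simp
  have e2 : π 0 (π 1 b0) = 0 := by rw [hc, h0, map_zero]
  have e3 : π 0 (π 2 (π 1 b0)) = 0 := by rw [hc, e2, map_zero]
  have e4 : π 1 (b0 - π 1 b0 + b1) = 0 := by simp [hi, h1]
  have e5 : π 1 (π 2 (b0 - π 1 b0 + b1)) = 0 := by rw [hc, e4, map_zero]
  have e6 : b3 = -(b0 + b1 + b2) := by rw [eq_neg_iff_add_eq_zero, ← hs]; abel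
  refine ⟨-(b0 - π 1 b0), -(π 1 b0 - π 2 (π 1 b0)), -(π 2 (π 1 b0)),
    -((b0 - π 1 b0 + b1) - π 2 (b0 - π 1 b0 + b1)), -(π 2 (b0 - π 1 b0 + b1)),
    b3 + π 2 (π 1 b0) + π 2 (b0 - π 1 b0 + b1), ⟨?_, ?_⟩, ⟨?_, ?_⟩, ⟨?_, ?_⟩, ⟨?_, ?_⟩, ⟨?_, ?_⟩,
    ⟨?_, ?_⟩, ?_, ?_, ?_, ?_⟩
  · rw [map_neg, map_sub, h0, e2]; simp
  · rw [map_neg, map_sub, hi]; simp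
  · rw [map_neg, map_sub, e3, e2]; simp
  · rw [map_neg, map_sub, hi]; simp
  · rw [map_neg, e3, neg_zero]
  · rw [map_neg, e0, neg_zero]
  · rw [map_neg, map_sub, e4, e5]; simp
  · rw [map_neg, map_sub, hi]; simp
  · rw [map_neg, e5, neg_zero]
  · rw [map_neg, e1, neg_zero]
  · rw [e6]; simp only [map_add, map_sub, map_neg, hi, h2]; abel
  · rw [map_add, map_add, h3, e0, e1]; simp
  · abel
  · abel
  · rw [e6]; abel
  · abel

/-- A weak form of exactness, one step further to the left than in `exists_pairs`: the last
component `c23` of a cycle `(c q r)` is a sum of elements of the triple intersections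
`ker π 1 ⊓ ker π 2 ⊓ ker π 3` and `ker π 0 ⊓ ker π 2 ⊓ ker π 3`. -/
theorem exists_triples (hi : ∀ q x, π q (π q x) = π q x)
    (hc : ∀ q r x, π q (π r x) = π r (π q x))
    (c01 c02 c03 c12 c13 c23 : M) (h01 : π 0 c01 = 0 ∧ π 1 c01 = 0)
    (h02 : π 0 c02 = 0 ∧ π 2 c02 = 0) (h03 : π 0 c03 = 0 ∧ π 3 c03 = 0)
    (h12 : π 1 c12 = 0 ∧ π 2 c12 = 0) (h13 : π 1 c13 = 0 ∧ π 3 c13 = 0)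
    (e0 : c01 + c02 + c03 = 0) (e1 : c01 - c12 - c13 = 0) (e2 : c02 + c12 - c23 = 0) :
    ∃ f0 f1 : M, (π 1 f0 = 0 ∧ π 2 f0 = 0 ∧ π 3 f0 = 0) ∧ (π 0 f1 = 0 ∧ π 2 f1 = 0 ∧ π 3 f1 = 0) ∧
      c23 = f0 + f1 := by
  have a1 : π 3 (π 2 c01) = 0 := by
    have : c01 = -(c02 + c03) := by rw [eq_neg_iff_add_eq_zero, ← e0]; abel
    rw [this]
    simp only [map_neg, map_add]
    rw [h02.2, hc 3 2, h03.2]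
    simp
  have a2 : c02 + c01 = - c03 := by rw [eq_neg_iff_add_eq_zero, ← e0]; abel
  have a3 : c12 - c01 = - c13 := by rw [eq_neg_iff_add_eq_zero, ← neg_eq_zero, ← e1]; abel
  refine ⟨c12 - (c01 - π 2 c01), c02 + (c01 - π 2 c01), ⟨?_, ?_, ?_⟩, ⟨?_, ?_, ?_⟩, ?_⟩
  · simp [h12.1, h01.2, hc 1 2]
  · simp [h12.2, hi]
  · rw [show c12 - (c01 - π 2 c01) = (c12 - c01) + π 2 c01 by abel, a3]; simp [h13.2, a1]
  · simp [h02.1, h01.1, hc 0 2]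
  · simp [h02.2, hi]
  · rw [show c02 + (c01 - π 2 c01) = (c02 + c01) - π 2 c01 by abel, a2]; simp [h03.2, a1]
  · rw [← sub_eq_zero, ← neg_eq_zero, ← e2]; abel

end Idem

/-! ### Descent through the resolution -/

section Descent

variable {R : Type*} [CommRing R]

/-- Entrywise application of a ring endomorphism to vectors with index set `τ`. -/
def mapVec (φ : R →+* R) (τ : Type*) : (τ → R) →+ (τ → R) :=
  (φ : R →+ R).compLeft τ

theorem mapVec_apply (φ : R →+* R) (τ : Type*) (v : τ → R) (g : τ) :
    mapVec φ τ v g = φ (v g) := rfl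

theorem mapVec_smul (φ : R →+* R) (τ : Type*) (a : R) (v : τ → R) :
    mapVec φ τ (a • v) = φ a • mapVec φ τ v := by
  funext g
  simp [mapVec_apply]

/-- Matrix multiplication preserves the vectors with entries in the ideal `ker φ`. -/
theorem mapVec_mulVec (φ : R →+* R) {τ τ' : Type*} [Fintype τ'] (A : Matrix τ τ' R)
    {v : τ' → R} (hv : mapVec φ τ' v = 0) : mapVec φ τ (A.mulVec v) = 0 := by
  funext g
  rw [mapVec_apply, Matrix.mulVec, dotProduct, map_sum]
  refine Finset.sum_eq_zero fun f _ => ?_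
  have := congrFun hv f
  rw [mapVec_apply] at this
  rw [map_mul, this, Pi.zero_apply, mul_zero]

/-- A vector killed by the composition of four idempotents is a sum of four vectors, the `q`-th
one killed by the `q`-th idempotent. -/
theorem exists_split (π : Fin 4 → R →+* R) (hi : ∀ q x, π q (π q x) = π q x) (τ : Type*)
    (s : τ → R) (hs : ∀ g, π 3 (π 2 (π 1 (π 0 (s g)))) = 0) :
    ∃ s0 s1 s2 s3 : τ → R, s = s0 + s1 + s2 + s3 ∧
      mapVec (π 0) τ s0 = 0 ∧ mapVec (π 1) τ s1 = 0 ∧ mapVec (π 2) τ s2 = 0 ∧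
      mapVec (π 3) τ s3 = 0 := by
  have hi : ∀ q v, mapVec (π q) τ (mapVec (π q) τ v) = mapVec (π q) τ v :=
    fun q v => funext fun g => hi q (v g)
  have h : mapVec (π 3) τ (mapVec (π 2) τ (mapVec (π 1) τ (mapVec (π 0) τ s))) = 0 := by
    funext g
    simp only [mapVec_apply, hs, Pi.zero_apply]
  refine ⟨s - mapVec (π 0) τ s,
    mapVec (π 0) τ s - mapVec (π 1) τ (mapVec (π 0) τ s),
    mapVec (π 1) τ (mapVec (π 0) τ s) -
      mapVec (π 2) τ (mapVec (π 1) τ (mapVec (π 0) τ s)),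
    mapVec (π 2) τ (mapVec (π 1) τ (mapVec (π 0) τ s)), by abel, ?_, ?_, ?_, h⟩ <;>
  rw [map_sub, hi, sub_self]

/-- If the entries of the vector `s ∈ F₃` obtained by lifting the Koszul-type cycle are killed by
the composition of the four idempotents, then `y 1 * y 2 * y 3 * m 0` is congruent modulo `I` to an
element of all four kernels. The subscripts of `w` and `t` list the factors `y q` by which the
elements still have to be multiplied to reach the degree of `s`. -/
theorem descent (π : Fin 4 → R →+* R) (hi : ∀ q x, π q (π q x) = π q x)
    (hc : ∀ q r x, π q (π r x) = π r (π q x)) (I : Ideal R)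
    {τ0 τ1 τ2 τ3 : Type} [Fintype τ0] [Fintype τ1] [Fintype τ2] [Fintype τ3]
    (p : τ0 → R) (A0 : Matrix τ0 τ1 R) (A1 : Matrix τ1 τ2 R) (A2 : Matrix τ2 τ3 R)
    (hA0I : ∀ f, ∑ g, A0.mulVec f g * p g ∈ I)
    (hc01 : ∀ v, A0.mulVec (A1.mulVec v) = 0) (hc12 : ∀ v, A1.mulVec (A2.mulVec v) = 0)
    (y m : Fin 4 → R) (hy0 : ∀ q, π q (y q) = 0)
    (v0 : τ0 → R) (hv1 : ∑ g, v0 g * p g - 1 ∈ I)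
    (w01 w02 w03 w12 w13 w23 : τ1 → R) (t0 t1 t2 t3 : τ2 → R) (s : τ3 → R)
    (a23 : A0.mulVec w23 = (y 1 * m 0 - y 0 * m 1) • v0)
    (at0 : A1.mulVec t0 = -(y 1 • w01 + y 2 • w02 + y 3 • w03))
    (at1 : A1.mulVec t1 = y 0 • w01 - y 2 • w12 - y 3 • w13)
    (at2 : A1.mulVec t2 = y 0 • w02 + y 1 • w12 - y 3 • w23)
    (as : A2.mulVec s = y 0 • t0 + y 1 • t1 + y 2 • t2 + y 3 • t3)
    (hs : ∀ g, π 3 (π 2 (π 1 (π 0 (s g)))) = 0) :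
    ∃ f, f - y 1 * y 2 * y 3 * m 0 ∈ I ∧ ∀ q, π q f = 0 := by
  have hi' : ∀ (τ : Type) q v, mapVec (π q) τ (mapVec (π q) τ v) = mapVec (π q) τ v :=
    fun τ q v => funext fun g => hi q (v g)
  have hc' : ∀ (τ : Type) q r v, mapVec (π q) τ (mapVec (π r) τ v) =
      mapVec (π r) τ (mapVec (π q) τ v) :=
    fun τ q r v => funext fun g => hc q r (v g)
  obtain ⟨s0, s1, s2, s3, hsum, k0, k1, k2, k3⟩ := exists_split π hi _ s hs
  -- The vectors `y q • t q - A2 *ᵥ s q` have entries in `ker (π q)` and sum to zero.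
  have hb : ∀ q (t : τ2 → R) (u : τ3 → R),
      mapVec (π q) _ u = 0 → mapVec (π q) _ (y q • t - A2.mulVec u) = 0 := by
    intro q t u hu
    rw [map_sub, mapVec_smul, hy0, zero_smul, mapVec_mulVec (π q) A2 hu, sub_zero]
  obtain ⟨c01, c02, c03, c12, c13, c23, h01, h02, h03, h12, h13, h23, b0, b1, b2, b3⟩ :=
    exists_pairs (fun q => mapVec (π q) τ2) (hi' _) (hc' _) _ _ _ _ (hb 0 t0 s0 k0) (hb 1 t1 s1 k1)
      (hb 2 t2 s2 k2) (hb 3 t3 s3 k3) (by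
        rw [hsum] at as
        simp only [Matrix.mulVec_add] at as
        rw [show (y 0 • t0 - A2.mulVec s0 + (y 1 • t1 - A2.mulVec s1) +
          (y 2 • t2 - A2.mulVec s2) + (y 3 • t3 - A2.mulVec s3)) =
          (y 0 • t0 + y 1 • t1 + y 2 • t2 + y 3 • t3) - (A2.mulVec s0 + A2.mulVec s1 +
            A2.mulVec s2 + A2.mulVec s3) by abel, sub_eq_zero]
        exact as.symm)
  have hb' : ∀ q (t : τ2 → R) (u : τ3 → R)
      (c : τ2 → R), y q • t - A2.mulVec u = c →
      A1.mulVec c = y q • A1.mulVec t := by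
    intro q t u c h
    rw [← h, Matrix.mulVec_sub, hc12, sub_zero, Matrix.mulVec_smul]
  replace b0 := hb' _ _ _ _ b0
  replace b1 := hb' _ _ _ _ b1
  replace b2 := hb' _ _ _ _ b2
  rw [at0] at b0
  rw [at1] at b1
  rw [at2] at b2
  simp only [Matrix.mulVec_neg, Matrix.mulVec_add, Matrix.mulVec_sub] at b0 b1 b2
  -- The vectors `(y q * y r) • w q r - A1 *ᵥ c q r` have entries in `ker (π q) ⊓ ker (π r)`
  -- and form a cycle.
  have hg : ∀ q r (w : τ1 → R) (c : τ2 → R),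
      mapVec (π q) _ c = 0 ∧ mapVec (π r) _ c = 0 →
      mapVec (π q) _ ((y q * y r) • w - A1.mulVec c) = 0 ∧
      mapVec (π r) _ ((y q * y r) • w - A1.mulVec c) = 0 := by
    intro q r w c h
    constructor
    · rw [map_sub, mapVec_smul, map_mul, hy0, zero_mul, zero_smul,
        mapVec_mulVec (π q) A1 h.1, sub_zero]
    · rw [map_sub, mapVec_smul, map_mul, hy0, mul_zero, zero_smul,
        mapVec_mulVec (π r) A1 h.2, sub_zero]
  obtain ⟨f0, f1, ⟨f01, f02, f03⟩, ⟨f10, f12, f13⟩, hf⟩ :=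
    exists_triples (fun q => mapVec (π q) τ1) (hi' _) (hc' _) _ _ _ _ _
      ((y 2 * y 3) • w23 - A1.mulVec c23) (hg 0 1 w01 c01 h01) (hg 0 2 w02 c02 h02)
      (hg 0 3 w03 c03 h03) (hg 1 2 w12 c12 h12) (hg 1 3 w13 c13 h13)
      (by linear_combination (norm := module) b0) (by linear_combination (norm := module) -b1)
      (by linear_combination (norm := module) -b2)
  replace hf := congrArg A0.mulVec hf
  rw [Matrix.mulVec_sub, hc01, sub_zero, Matrix.mulVec_smul, a23, Matrix.mulVec_add] at hf
  set G := (y 1 * y 2 * y 3 * m 0) • v0 - A0.mulVec f0 with hG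
  have hG' : G = (y 0 * y 2 * y 3 * m 1) • v0 + A0.mulVec f1 := by
    rw [hG, sub_eq_iff_eq_add, add_assoc, add_comm (A0.mulVec f1), ← hf]
    module
  -- The first expression for `G` shows that `π 1`, `π 2` and `π 3` kill it, the second one
  -- that `π 0` does.
  have hGk : ∀ q, mapVec (π q) _ G = 0 := by
    intro q
    have h4 : q = 0 ∨ q = 1 ∨ q = 2 ∨ q = 3 := by fin_cases q <;> simp
    rcases h4 with rfl | rfl | rfl | rfl
    · rw [hG', map_add, mapVec_smul, mapVec_mulVec (π 0) _ f10]
      simp [hy0]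
    · rw [hG, map_sub, mapVec_smul, mapVec_mulVec (π 1) _ f01]
      simp [hy0]
    · rw [hG, map_sub, mapVec_smul, mapVec_mulVec (π 2) _ f02]
      simp [hy0]
    · rw [hG, map_sub, mapVec_smul, mapVec_mulVec (π 3) _ f03]
      simp [hy0]
  refine ⟨∑ g, G g * p g, ?_, ?_⟩
  · have hA0f : ∑ g, A0.mulVec f0 g * p g ∈ I :=
      hA0I f0
    have : ∑ g, G g * p g - y 1 * y 2 * y 3 * m 0 =
        y 1 * y 2 * y 3 * m 0 * (∑ g, v0 g * p g - 1) - ∑ g, A0.mulVec f0 g * p g := by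
      rw [mul_sub, Finset.mul_sum, mul_one, sub_right_comm, ← Finset.sum_sub_distrib]
      congr 1
      refine Finset.sum_congr rfl fun g _ => ?_
      simp only [hG, Pi.sub_apply, Pi.smul_apply, smul_eq_mul]
      ring
    rw [this]
    exact I.sub_mem (I.mul_mem_left _ hv1) hA0f
  · intro q
    rw [map_sum]
    refine Finset.sum_eq_zero fun g _ => ?_
    have := congrFun (hGk q) g
    rw [mapVec_apply] at this
    rw [map_mul, this, Pi.zero_apply, zero_mul]

end Descent

/-! ### Ascent: lifting the Koszul-type cycle -/

section Chase

variable {k : Type*} [Field k] {V : Type*}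

/-- The endomorphism of the polynomial ring that sets all variables of class `q` to zero. Its
kernel is the ideal generated by these variables. -/
noncomputable def kill (k : Type*) [Field k] (cls : V → Fin 4) (q : Fin 4) :
    MvPolynomial V k →ₐ[k] MvPolynomial V k :=
  aeval fun i => if cls i = q then 0 else X i

theorem kill_X_self (cls : V → Fin 4) (q : Fin 4) (i : V) (h : cls i = q) :
    kill k cls q (X i) = 0 := by simp [kill, h]

theorem kill_kill (cls : V → Fin 4) (q : Fin 4) (f : MvPolynomial V k) :
    kill k cls q (kill k cls q f) = kill k cls q f := by
  rw [← AlgHom.comp_apply]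
  congr 1
  ext1 i
  by_cases h : cls i = q <;> simp [kill, h]

theorem kill_comm (cls : V → Fin 4) (q r : Fin 4) (f : MvPolynomial V k) :
    kill k cls q (kill k cls r f) = kill k cls r (kill k cls q f) := by
  rw [← AlgHom.comp_apply, ← AlgHom.comp_apply]
  congr 1
  ext1 i
  have hX : ∀ q, kill k cls q (X i) = if cls i = q then 0 else X i := fun q => by simp [kill]
  simp only [AlgHom.comp_apply, hX]
  by_cases h : cls i = q
  · by_cases h' : cls i = r
    · simp only [if_pos h, if_pos h', map_zero]
    · simp only [if_pos h, if_neg h', map_zero, hX]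
  · by_cases h' : cls i = r
    · simp only [if_neg h, if_pos h', map_zero, hX]
    · simp only [if_neg h, if_neg h', hX]

theorem kill_all (cls : V → Fin 4) (f : MvPolynomial V k) :
    kill k cls 3 (kill k cls 2 (kill k cls 1 (kill k cls 0 f))) = C (constantCoeff f) := by
  induction f using MvPolynomial.induction_on with
  | C a => simp [kill]
  | add f g hf hg => simp only [map_add, hf, hg]
  | mul_X f i hf =>
    have h4 : cls i = 0 ∨ cls i = 1 ∨ cls i = 2 ∨ cls i = 3 := by
      generalize cls i = j
      fin_cases j <;> simp
    have h0 : kill k cls 3 (kill k cls 2 (kill k cls 1 (kill k cls 0 (X i)))) = 0 := by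
      rcases h4 with h | h | h | h <;> simp [kill, h]
    simp only [map_mul, h0, constantCoeff_X, mul_zero, map_zero]

/-- The diagram chase in a free resolution of `k[x]/I`: if the monomials
`y 0 * y 1 * y 2 * y 3 * m q / y q`, where `y q = X (i q)` and `m q = monomial (e q) 1`, have
degree `D`, the differences `y r * m q - y q * m r` lie in `I`, and `y 1 * y 2 * y 3 * m 0` is not
congruent modulo `I` to an element of all the kernels of `kill q`, then `F₃` contains a homogeneous
vector of degree `D` with an entry that has nonzero constant term. -/
theorem exists_top_syzygy [Fintype V] {Γ : Type*} [AddCommGroup Γ] (dg : (V →₀ ℕ) →+ Γ)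
    (cls : V → Fin 4) (I : Ideal (MvPolynomial V k)) (σ : ℕ → Type) [∀ j, Fintype (σ j)]
    (A : ∀ j, Matrix (σ j) (σ (j + 1)) (MvPolynomial V k)) (p : σ 0 → MvPolynomial V k)
    (hfree : IsFreeResolution k I σ A p) (deg : ∀ j, σ j → Γ)
    (hA : ∀ j g f, ∀ u ∈ (A j g f).support, dg u + deg j g = deg (j + 1) f)
    (D : Γ) (i : Fin 4 → V) (hcls : ∀ q, cls (i q) = q) (e : Fin 4 → V →₀ ℕ)
    (hdeg : ∀ q, dg (e q) + dg (Finsupp.single (i 0) 1) + dg (Finsupp.single (i 1) 1) +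
      dg (Finsupp.single (i 2) 1) + dg (Finsupp.single (i 3) 1) =
        D + dg (Finsupp.single (i q) 1))
    (hI : ∀ q r, X (i r) * monomial (e q) (1 : k) - X (i q) * monomial (e r) 1 ∈ I)
    (v0 : σ 0 → MvPolynomial V k) (hv0 : IsHomVec dg (deg 0) 0 v0)
    (hv1 : ∑ g, v0 g * p g - 1 ∈ I)
    (hnot : ∀ f, f - X (i 1) * X (i 2) * X (i 3) * monomial (e 0) 1 ∈ I →
      ¬ ∀ q, kill k cls q f = 0) :
    ∃ s : σ 3 → MvPolynomial V k, IsHomVec dg (deg 3) D s ∧ ∃ g, constantCoeff (s g) ≠ 0 := by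
  obtain ⟨-, hex0, hex⟩ := hfree
  have hcomp : ∀ j v, (A j).mulVec ((A (j + 1)).mulVec v) = 0 := fun j v => by
    have : (A (j + 1)).mulVecLin v ∈ LinearMap.ker (A j).mulVecLin := by
      rw [hex]; exact LinearMap.mem_range_self _ _
    exact this
  have step : ∀ j E v, IsHomVec dg (deg (j + 1)) E v → (A j).mulVec v = 0 →
      ∃ w, (A (j + 1)).mulVec w = v ∧ IsHomVec dg (deg (j + 1 + 1)) E w := by
    intro j E v hv h0
    refine exists_isHomVec_lift dg _ _ _ (hA (j + 1)) E v hv ?_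
    rw [← hex]
    exact h0
  set y : Fin 4 → MvPolynomial V k := fun q => X (i q) with hy
  set m : Fin 4 → MvPolynomial V k := fun q => monomial (e q) 1 with hm
  set ω : Fin 4 → Γ := fun q => dg (Finsupp.single (i q) 1) with hω
  have hsm : ∀ {τ : Type} {dd : τ → Γ} {E E' : Γ} {v : τ → MvPolynomial V k} (q : Fin 4),
      IsHomVec dg dd E v → ω q + E = E' → IsHomVec dg dd E' (y q • v) :=
    fun q hv h => hv.monomial_smul _ h
  have hW : ∀ q r, ∃ w, (A 0).mulVec w = (y r * m q - y q * m r) • v0 ∧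
      ∀ E, dg (e q) + ω r = E → IsHomVec dg (deg 1) E w := by
    intro q r
    have hom : IsHomVec dg (deg 0) (dg (e q) + ω r) ((y r * m q - y q * m r) • v0) := by
      rw [sub_smul, mul_smul, mul_smul]
      refine (hsm _ (hv0.monomial_smul (e q) rfl) (by abel)).sub
        (hsm _ (hv0.monomial_smul (e r) rfl) ?_)
      have h1 := hdeg q
      have h2 := hdeg r
      have h3 : dg (e q) - ω q = dg (e r) - ω r := by
        rw [sub_eq_sub_iff_add_eq_add]
        have h4 : dg (e q) + ω r + (ω 0 + ω 1 + ω 2 + ω 3) =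
          dg (e r) + ω q + (ω 0 + ω 1 + ω 2 + ω 3) := by
          calc _ = (dg (e q) + ω 0 + ω 1 + ω 2 + ω 3) + ω r := by abel
            _ = (dg (e r) + ω 0 + ω 1 + ω 2 + ω 3) + ω q := by
              rw [h1, h2]; simp only [hω]; abel
            _ = _ := by abel
        exact add_right_cancel h4
      rw [sub_eq_sub_iff_add_eq_add] at h3
      rw [h3]; abel
    obtain ⟨w, hw, hw'⟩ := exists_isHomVec_lift dg _ _ _ (hA 0) _ _ hom (by
      rw [← hex0]
      have : ∑ g, ((y r * m q - y q * m r) • v0) g * p g =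
          (y r * m q - y q * m r) * ∑ g, v0 g * p g := by
        rw [Finset.mul_sum]
        exact Finset.sum_congr rfl fun g _ => by simp [mul_assoc]
      rw [this]
      exact I.mul_mem_right _ (hI q r))
    exact ⟨w, hw, fun E hE => hE ▸ hw'⟩
  have hdg : ∀ q, dg (e q) = D + ω q - ω 0 - ω 1 - ω 2 - ω 3 := fun q => by
    rw [← hdeg q]; simp only [hω]; abel
  -- `w q r` comes from the two indices complementary to `q` and `r`, so it has degree
  -- `D - ω q - ω r`; the order of these indices fixes the Koszul signs.
  obtain ⟨w23, a23, d23⟩ := hW 0 1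
  obtain ⟨w13, a13, d13⟩ := hW 2 0
  obtain ⟨w12, a12, d12⟩ := hW 0 3
  obtain ⟨w03, a03, d03⟩ := hW 1 2
  obtain ⟨w02, a02, d02⟩ := hW 3 1
  obtain ⟨w01, a01, d01⟩ := hW 2 3
  replace d23 := d23 (D - ω 2 - ω 3) (by rw [hdg]; abel)
  replace d13 := d13 (D - ω 1 - ω 3) (by rw [hdg]; abel)
  replace d12 := d12 (D - ω 1 - ω 2) (by rw [hdg]; abel)
  replace d03 := d03 (D - ω 0 - ω 3) (by rw [hdg]; abel)
  replace d02 := d02 (D - ω 0 - ω 2) (by rw [hdg]; abel)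
  replace d01 := d01 (D - ω 0 - ω 1) (by rw [hdg]; abel)
  obtain ⟨t0, at0, dt0⟩ := step 0 (D - ω 0) (-(y 1 • w01 + y 2 • w02 + y 3 • w03))
    (((hsm 1 d01 (by abel)).add (hsm 2 d02 (by abel))).add (hsm 3 d03 (by abel))).neg (by
      simp only [Matrix.mulVec_neg, Matrix.mulVec_add, Matrix.mulVec_smul, a01, a02, a03]
      module)
  obtain ⟨t1, at1, dt1⟩ := step 0 (D - ω 1) (y 0 • w01 - y 2 • w12 - y 3 • w13)
    (((hsm 0 d01 (by abel)).sub (hsm 2 d12 (by abel))).sub (hsm 3 d13 (by abel))) (by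
      simp only [Matrix.mulVec_sub, Matrix.mulVec_smul, a01, a12, a13]
      module)
  obtain ⟨t2, at2, dt2⟩ := step 0 (D - ω 2) (y 0 • w02 + y 1 • w12 - y 3 • w23)
    (((hsm 0 d02 (by abel)).add (hsm 1 d12 (by abel))).sub (hsm 3 d23 (by abel))) (by
      simp only [Matrix.mulVec_sub, Matrix.mulVec_add, Matrix.mulVec_smul, a02, a12, a23]
      module)
  obtain ⟨t3, at3, dt3⟩ := step 0 (D - ω 3) (y 0 • w03 + y 1 • w13 + y 2 • w23)
    (((hsm 0 d03 (by abel)).add (hsm 1 d13 (by abel))).add (hsm 2 d23 (by abel))) (by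
      simp only [Matrix.mulVec_add, Matrix.mulVec_smul, a03, a13, a23]
      module)
  obtain ⟨s, as, ds⟩ := step 1 D (y 0 • t0 + y 1 • t1 + y 2 • t2 + y 3 • t3)
    ((((hsm 0 dt0 (by abel)).add (hsm 1 dt1 (by abel))).add (hsm 2 dt2 (by abel))).add
      (hsm 3 dt3 (by abel))) (by
      simp only [Matrix.mulVec_add, Matrix.mulVec_smul]
      erw [at0, at1, at2, at3]
      module)
  refine ⟨s, ds, ?_⟩
  by_contra! hs
  obtain ⟨f, hf1, hf2⟩ := descent
    (fun q => (kill k cls q : MvPolynomial V k →+* MvPolynomial V k)) (kill_kill cls)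
    (kill_comm cls) I p (A 0) (A 1) (A 2)
    (fun f => (hex0 _).2 (LinearMap.mem_range_self (A 0).mulVecLin f)) (hcomp 0) (hcomp 1) y m
    (fun q => kill_X_self cls q _ (hcls q)) v0 hv1 w01 w02 w03 w12 w13 w23 t0 t1 t2 t3 s a23
    at0 at1 at2 as (fun g => (kill_all cls (s g)).trans (by rw [hs g, map_zero]))
  exact hnot f hf1 hf2

theorem kill_monomial (cls : V → Fin 4) (q : Fin 4) (e : V →₀ ℕ) (a : k)
    (h : ∃ i, cls i = q ∧ e i ≠ 0) : kill k cls q (monomial e a) = 0 := by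
  obtain ⟨i, hi, he⟩ := h
  have : e = Finsupp.single i 1 + (e - Finsupp.single i 1) := by
    refine (add_tsub_cancel_of_le ?_).symm
    rw [Finsupp.single_le_iff]
    omega
  rw [this, ← one_mul a, ← monomial_mul, map_mul]
  have h0 := kill_X_self (k := k) cls q i hi
  rw [X] at h0
  rw [h0, zero_mul]

theorem kill_monomial_of_forall (cls : V → Fin 4) (q : Fin 4) (e : V →₀ ℕ) (a : k)
    (h : ∀ i, cls i = q → e i = 0) : kill k cls q (monomial e a) = monomial e a := by
  rw [kill, aeval_monomial, monomial_eq, algebraMap_eq]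
  congr 1
  refine Finsupp.prod_congr fun i hi => ?_
  rw [if_neg]
  exact fun hc => Finsupp.mem_support_iff.1 hi (h i hc)

/-- Setting the variables of class `q` to zero does not change the coefficients of the monomials
that avoid this class. -/
theorem coeff_kill (cls : V → Fin 4) (q : Fin 4) (u : V →₀ ℕ) (h : ∀ i, cls i = q → u i = 0)
    (f : MvPolynomial V k) : coeff u (kill k cls q f) = coeff u f := by
  classical
  induction f using MvPolynomial.induction_on' with
  | monomial e a =>
    by_cases he : ∃ i, cls i = q ∧ e i ≠ 0
    · rw [kill_monomial cls q e a he, coeff_monomial, if_neg, coeff_zero]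
      rintro rfl
      obtain ⟨i, hi, hne⟩ := he
      exact hne (h i hi)
    · push Not at he
      rw [kill_monomial_of_forall cls q e a he]
  | add f g hf hg => rw [map_add, coeff_add, coeff_add, hf, hg]

end Chase

/-! ### Degrees modulo the lattice -/

section Fiber

variable {k : Type*} [Field k] {V : Type*} [Fintype V]

/-- The degree `degQ L` in `ℤ^V/L` as an additive homomorphism. -/
noncomputable def degHom (L : Submodule ℤ (V → ℤ)) : (V →₀ ℕ) →+ ((V → ℤ) ⧸ L) where
  toFun := degQ L
  map_zero' := by
    rw [degQ, Submodule.Quotient.mk_eq_zero]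
    convert L.zero_mem
    simp
  map_add' u v := by
    rw [degQ, degQ, degQ, ← Submodule.Quotient.mk_add]
    congr 1

theorem degHom_apply (L : Submodule ℤ (V → ℤ)) (u : V →₀ ℕ) : degHom L u = degQ L u := rfl

theorem posExp_apply (u : V → ℤ) (i : V) : posExp u i = (u i).toNat := rfl

theorem negExp_apply (u : V → ℤ) (i : V) : negExp u i = (-u i).toNat := rfl

theorem degHom_eq_iff (L : Submodule ℤ (V → ℤ)) (u v : V →₀ ℕ) :
    degHom L u = degHom L v ↔ (fun i => (u i : ℤ) - v i) ∈ L := by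
  rw [degHom_apply, degHom_apply, degQ, degQ, Submodule.Quotient.eq]
  rfl

theorem degHom_posExp (L : Submodule ℤ (V → ℤ)) {u : V → ℤ} (hu : u ∈ L) :
    degHom L (posExp u) = degHom L (negExp u) := by
  rw [degHom_eq_iff]
  convert hu using 1
  funext i
  rw [posExp_apply, negExp_apply]
  omega

theorem monomial_sub_mem (L : Submodule ℤ (V → ℤ)) (u v : V →₀ ℕ)
    (h : degHom L u = degHom L v) :
    monomial u (1 : k) - monomial v 1 ∈ latticeIdeal k L := by
  rw [degHom_eq_iff] at h
  set d : V → ℤ := fun i => (u i : ℤ) - v i with hd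
  have hu : u = u ⊓ v + posExp d := by
    ext i
    rw [Finsupp.add_apply, Finsupp.inf_apply, posExp_apply, hd]
    grind
  have hv : v = u ⊓ v + negExp d := by
    ext i
    rw [Finsupp.add_apply, Finsupp.inf_apply, negExp_apply, hd]
    grind
  have : monomial u (1 : k) - monomial v 1 = monomial (u ⊓ v) 1 * latticeBinomial k d := by
    rw [latticeBinomial, mul_sub, monomial_mul, monomial_mul, ← hu, ← hv, one_mul]
  rw [this]
  exact Ideal.mul_mem_left _ _ (Ideal.subset_span ⟨d, h, rfl⟩)

/-- On the lattice ideal the sum of the coefficients in any fixed degree vanishes, because the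
two monomials of a lattice binomial have the same degree. -/
theorem eval_homPart_of_mem (L : Submodule ℤ (V → ℤ)) (D : (V → ℤ) ⧸ L)
    (f : MvPolynomial V k) (hf : f ∈ latticeIdeal k L) :
    eval (fun _ => 1) (homPart (degHom L) D f) = 0 := by
  classical
  obtain ⟨n, r, b, rfl⟩ := Submodule.mem_span_set'.1 hf
  rw [homPart_sum, map_sum]
  refine Finset.sum_eq_zero fun j _ => ?_
  obtain ⟨_, u, hu, rfl⟩ := b j
  have hom : ∀ w ∈ (latticeBinomial k u).support, degHom L w = degHom L (posExp u) := by
    intro w hw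
    rcases Finset.mem_union.1 (support_sub _ _ _ hw) with h | h
    · rw [Finset.mem_singleton.1 (support_monomial_subset h)]
    · rw [Finset.mem_singleton.1 (support_monomial_subset h), degHom_posExp L hu]
  have := homPart_mul (degHom L) (degHom L (posExp u)) (D - degHom L (posExp u)) _ (r j) hom
  rw [add_sub_cancel] at this
  rw [smul_eq_mul, mul_comm, this, map_mul]
  simp [latticeBinomial, eval_monomial]

/-- For a positive lattice, `1` is the only monomial of degree zero. -/
theorem eq_zero_of_degHom (L : Submodule ℤ (V → ℤ)) (hpos : IsPositiveLattice L) (u : V →₀ ℕ)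
    (hu : degHom L u = 0) : u = 0 := by
  rw [← map_zero (degHom L), degHom_eq_iff] at hu
  have := hpos _ hu (fun i => by simp)
  ext i
  simpa using congrFun this i

theorem constantCoeff_of_mem (L : Submodule ℤ (V → ℤ)) (hpos : IsPositiveLattice L)
    (f : MvPolynomial V k) (hf : f ∈ latticeIdeal k L) : constantCoeff f = 0 := by
  classical
  have h : homPart (degHom L) 0 f = C (constantCoeff f) := by
    ext u
    rw [coeff_homPart, coeff_C]
    by_cases hu : u = 0
    · subst hu
      simp [constantCoeff_eq]
    · rw [if_neg (fun h => hu (eq_zero_of_degHom L hpos u h)), if_neg (Ne.symm hu)]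
  have := eval_homPart_of_mem L 0 f hf
  rwa [h, eval_C] at this

/-- The preimage of `1` under a graded augmentation can be chosen homogeneous of degree zero:
positivity forces some `p g` to be a nonzero constant. -/
theorem exists_augmentation_hom {τ : Type*} [Fintype τ] (L : Submodule ℤ (V → ℤ))
    (hpos : IsPositiveLattice L) (deg : τ → (V → ℤ) ⧸ L) (p : τ → MvPolynomial V k)
    (hp : ∀ g, ∀ u ∈ (p g).support, degQ L u = deg g)
    (h : Ideal.span (Set.range p) ⊔ latticeIdeal k L = ⊤) :
    ∃ v : τ → MvPolynomial V k, IsHomVec (degHom L) deg 0 v ∧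
      ∑ g, v g * p g - 1 ∈ latticeIdeal k L := by
  classical
  obtain ⟨v, hv⟩ := exists_augmentation _ p h
  have hc := constantCoeff_of_mem L hpos _ hv
  rw [map_sub, map_sum, map_one, sub_eq_zero] at hc
  obtain ⟨g, -, hg⟩ := Finset.exists_ne_zero_of_sum_ne_zero (hc ▸ one_ne_zero)
  rw [map_mul] at hg
  have hg0 := right_ne_zero_of_mul hg
  have hdeg : deg g = 0 := by
    rw [← hp g 0 (mem_support_iff.2 hg0)]
    exact map_zero (degHom L)
  have hpg : p g = C (constantCoeff (p g)) := by
    ext u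
    rw [coeff_C]
    split_ifs with hu
    · rw [← hu]; rfl
    · by_contra hne
      refine hu (eq_zero_of_degHom L hpos u ?_).symm
      rw [degHom_apply, hp g u (mem_support_iff.2 hne), hdeg]
  refine ⟨Pi.single g (C (constantCoeff (p g))⁻¹), ?_, ?_⟩
  · intro g' u hu
    by_cases hgg : g' = g
    · subst hgg
      rw [Pi.single_eq_same] at hu
      rw [Finset.mem_singleton.1 (support_monomial_subset hu), map_zero, hdeg, add_zero]
    · rw [Pi.single_eq_of_ne hgg] at hu
      simp at hu
  · rw [Finset.sum_eq_single g]
    · rw [Pi.single_eq_same, hpg, constantCoeff_C, ← C_mul, inv_mul_cancel₀ hg0, C_1, sub_self]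
      exact Ideal.zero_mem _
    · intro b _ hb
      rw [Pi.single_eq_of_ne hb, zero_mul]
    · simp

end Fiber

/-! ### The fiber of `(B₁)₊ + (B₂)₊` -/

section Quadrants

variable {n : ℕ}

/-- The class of a variable: `0`, `1`, `2`, `3` if the two entries of its row of `B` have
the signs `(+, +)`, `(+, -)`, `(-, +)`, `(-, -)` respectively, with zero counted as negative. -/
def quadrant (B : Matrix (Fin n) (Fin 2) ℤ) (j : Fin n) : Fin 4 :=
  if 0 < B j 0 then (if 0 < B j 1 then 0 else 1) else (if 0 < B j 1 then 2 else 3)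

/-- The nonnegative points of the fiber `C∘`, written as `(B₁)₊ + (B₂)₊ + x B₁ + z B₂`, have
`x, z ∈ {0, -1}`: each open quadrant contains a row, which excludes all other values. -/
theorem fiber_coords (B : Matrix (Fin n) (Fin 2) ℤ) (hquad : MeetsFourQuadrants B) (x z : ℤ)
    (h : ∀ i, 0 ≤ max (B i 0) 0 + max (B i 1) 0 + B i 0 * x + B i 1 * z) :
    (x = 0 ∨ x = -1) ∧ (z = 0 ∨ z = -1) := by
  obtain ⟨⟨i0, p0, p0'⟩, ⟨i1, p1, p1'⟩, ⟨i2, p2, p2'⟩, ⟨i3, p3, p3'⟩⟩ := hquad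
  have h0 := h i0
  have h1 := h i1
  have h2 := h i2
  have h3 := h i3
  rw [max_eq_left p0.le, max_eq_left p0'.le] at h0
  rw [max_eq_left p1.le, max_eq_right p1'.le] at h1
  rw [max_eq_right p2.le, max_eq_left p2'.le] at h2
  rw [max_eq_right p3.le, max_eq_right p3'.le] at h3
  have hx1 : x ≤ 0 := by
    by_contra! hx
    rcases lt_or_ge z 0 with hz | hz
    · nlinarith [mul_pos hx (neg_pos.2 p2), mul_nonneg p2'.le (by omega : 0 ≤ -1 - z)]
    · nlinarith [mul_pos hx (neg_pos.2 p3), mul_nonneg (neg_pos.2 p3').le hz]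
  have hx2 : -1 ≤ x := by
    by_contra! hx
    have hx' : 0 < -1 - x := by omega
    rcases lt_or_ge z 0 with hz | hz
    · nlinarith [mul_pos hx' p0, mul_nonneg p0'.le (by omega : 0 ≤ -1 - z)]
    · nlinarith [mul_pos hx' p1, mul_nonneg (neg_pos.2 p1').le hz]
  have hz1 : z ≤ 0 := by
    by_contra! hz
    rcases lt_or_ge x 0 with hx | hx
    · nlinarith [mul_pos hz (neg_pos.2 p1'), mul_nonneg p1.le (by omega : 0 ≤ -1 - x)]
    · nlinarith [mul_pos hz (neg_pos.2 p3'), mul_nonneg (neg_pos.2 p3).le hx]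
  have hz2 : -1 ≤ z := by
    by_contra! hz
    have hz' : 0 < -1 - z := by omega
    rcases lt_or_ge x 0 with hx | hx
    · nlinarith [mul_pos hz' p0', mul_nonneg p0.le (by omega : 0 ≤ -1 - x)]
    · nlinarith [mul_pos hz' p2', mul_nonneg (neg_pos.2 p2).le hx]
  omega

/-- The fiber `C∘` containing `(B₁)₊ + (B₂)₊`. -/
noncomputable def topFiber (B : Matrix (Fin n) (Fin 2) ℤ) : (Fin n → ℤ) ⧸ colSpan B :=
  Submodule.Quotient.mk fun i => max (B i 0) 0 + max (B i 1) 0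

/-- No monomial of degree `C∘` involves variables of all four classes. -/
theorem exists_missed_quadrant (B : Matrix (Fin n) (Fin 2) ℤ) (hquad : MeetsFourQuadrants B)
    (u : Fin n →₀ ℕ) (hu : degHom (colSpan B) u = topFiber B) :
    ∃ q, ∀ j, quadrant B j = q → u j = 0 := by
  rw [degHom_apply, degQ, topFiber, Submodule.Quotient.eq] at hu
  obtain ⟨v, hv⟩ := hu
  have hj : ∀ j, (u j : ℤ) = max (B j 0) 0 + max (B j 1) 0 + B j 0 * v 0 + B j 1 * v 1 := by
    intro j
    have := congrFun hv j
    simp only [Matrix.mulVecLin_apply, Matrix.mulVec, dotProduct, Fin.sum_univ_two,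
      Pi.sub_apply] at this
    linarith
  obtain ⟨hx, hz⟩ := fiber_coords B hquad (v 0) (v 1) (fun i => by rw [← hj i]; positivity)
  rcases hx with hx | hx <;> rcases hz with hz | hz <;> simp only [hx, hz] at hj
  · refine ⟨3, fun j hq => ?_⟩
    have := hj j
    unfold quadrant at hq
    split_ifs at hq <;> omega
  · refine ⟨2, fun j hq => ?_⟩
    have := hj j
    unfold quadrant at hq
    split_ifs at hq <;> omega
  · refine ⟨1, fun j hq => ?_⟩
    have := hj j
    unfold quadrant at hq
    split_ifs at hq <;> omega
  · refine ⟨0, fun j hq => ?_⟩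
    have := hj j
    unfold quadrant at hq
    split_ifs at hq <;> omega

/-- The four nonnegative points of the fiber `C∘`; the point with index `q` vanishes on the rows
of class `q`. -/
noncomputable def corner (B : Matrix (Fin n) (Fin 2) ℤ) : Fin 4 → Fin n →₀ ℕ :=
  ![negExp (fun i => B i 0) + negExp (fun i => B i 1),
    negExp (fun i => B i 0) + posExp (fun i => B i 1),
    posExp (fun i => B i 0) + negExp (fun i => B i 1),
    posExp (fun i => B i 0) + posExp (fun i => B i 1)]

theorem degHom_corner (B : Matrix (Fin n) (Fin 2) ℤ) (q : Fin 4) :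
    degHom (colSpan B) (corner B q) = topFiber B := by
  have hcol : ∀ j, (fun i => B i j) ∈ colSpan B := fun j =>
    ⟨Pi.single j 1, by simp [Matrix.mulVec_single]; rfl⟩
  have h3 : degHom (colSpan B) (posExp (fun i => B i 0) + posExp (fun i => B i 1)) =
      topFiber B := by
    rw [degHom_apply, degQ, topFiber]
    congr 1
    funext i
    rw [Finsupp.add_apply, posExp_apply, posExp_apply]
    omega
  rw [map_add] at h3
  have h0 := degHom_posExp _ (hcol 0)
  have h1 := degHom_posExp _ (hcol 1)
  fin_cases q
  · change degHom _ (_ + _) = _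
    rw [map_add, ← h0, ← h1, h3]
  · change degHom _ (_ + _) = _
    rw [map_add, ← h0, h3]
  · change degHom _ (_ + _) = _
    rw [map_add, ← h1, h3]
  · change degHom _ (_ + _) = _
    rw [map_add, h3]

/-- The hypotheses of `exists_top_syzygy` hold for the lattice ideal: one row `i q` is chosen in
each open quadrant, and `e q` is the exponent of the corner `q` divided by `∏_{r ≠ q} X (i r)`. -/
theorem exists_corner_data (k : Type*) [Field k] (B : Matrix (Fin n) (Fin 2) ℤ)
    (hquad : MeetsFourQuadrants B) :
    ∃ (i : Fin 4 → Fin n) (e : Fin 4 → Fin n →₀ ℕ), (∀ q, quadrant B (i q) = q) ∧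
      (∀ q, degHom (colSpan B) (e q) + degHom (colSpan B) (Finsupp.single (i 0) 1) +
        degHom (colSpan B) (Finsupp.single (i 1) 1) +
        degHom (colSpan B) (Finsupp.single (i 2) 1) +
        degHom (colSpan B) (Finsupp.single (i 3) 1) =
          topFiber B + degHom (colSpan B) (Finsupp.single (i q) 1)) ∧
      (∀ q r, X (i r) * monomial (e q) (1 : k) - X (i q) * monomial (e r) 1 ∈
        latticeIdeal k (colSpan B)) ∧
      (∀ f, f - X (i 1) * X (i 2) * X (i 3) * monomial (e 0) 1 ∈ latticeIdeal k (colSpan B) →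
        ¬ ∀ q, kill k (quadrant B) q f = 0) := by
  classical
  have hq := hquad
  obtain ⟨⟨i0, p0, p0'⟩, ⟨i1, p1, p1'⟩, ⟨i2, p2, p2'⟩, ⟨i3, p3, p3'⟩⟩ := hq
  set i : Fin 4 → Fin n := ![i0, i1, i2, i3] with hi
  have hcls : ∀ q, quadrant B (i q) = q := by
    intro q
    fin_cases q
    · change quadrant B i0 = 0
      simp [quadrant, p0, p0']
    · change quadrant B i1 = 1
      simp [quadrant, p1, p1'.le]
    · change quadrant B i2 = 2
      simp [quadrant, p2.le, p2']
    · change quadrant B i3 = 3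
      unfold quadrant
      rw [if_neg (by omega), if_neg (by omega)]
  have hinj : Function.Injective i := fun a b h => by rw [← hcls a, ← hcls b, h]
  have hcorner : ∀ q r, r ≠ q → 1 ≤ corner B q (i r) := by
    have e0 : i 0 = i0 := rfl
    have e1 : i 1 = i1 := rfl
    have e2 : i 2 = i2 := rfl
    have e3 : i 3 = i3 := rfl
    intro q r hqr
    fin_cases q <;> fin_cases r <;> first | exact absurd rfl hqr | skip
    all_goals
      simp only [corner, Fin.zero_eta, Fin.mk_one, Fin.reduceFinMk, Matrix.cons_val,
        Finsupp.add_apply, posExp_apply, negExp_apply, e0, e1, e2, e3]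
      omega
  -- With `S` the exponent of `∏ r, X (i r)`, the exponent `e q` below is the corner divided by
  -- all `X (i r)` with `r ≠ q`.
  set S : Fin n →₀ ℕ := ∑ r, Finsupp.single (i r) 1 with hS
  have hle : ∀ q, S ≤ corner B q + Finsupp.single (i q) 1 := by
    intro q j
    rw [hS, Finsupp.finsetSum_apply, Finsupp.add_apply]
    by_cases hj : ∃ r, i r = j
    · obtain ⟨r, rfl⟩ := hj
      rw [Finset.sum_eq_single r (fun b _ hb => Finsupp.single_eq_of_ne
        (fun h => hb (hinj h.symm))) (by simp), Finsupp.single_eq_same]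
      by_cases hr : r = q
      · subst hr; simp
      · have := hcorner q r hr
        omega
    · push Not at hj
      rw [Finset.sum_eq_zero (fun r _ => Finsupp.single_eq_of_ne (hj r).symm)]
      exact Nat.zero_le _
  set e : Fin 4 → Fin n →₀ ℕ := fun q => corner B q + Finsupp.single (i q) 1 - S with he
  have heS : ∀ q, e q + S = corner B q + Finsupp.single (i q) 1 := fun q =>
    tsub_add_cancel_of_le (hle q)
  have hdeg : ∀ q, degHom (colSpan B) (e q) + degHom (colSpan B) (Finsupp.single (i 0) 1) +
        degHom (colSpan B) (Finsupp.single (i 1) 1) +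
        degHom (colSpan B) (Finsupp.single (i 2) 1) +
        degHom (colSpan B) (Finsupp.single (i 3) 1) =
          topFiber B + degHom (colSpan B) (Finsupp.single (i q) 1) := by
    intro q
    rw [← degHom_corner B q, ← map_add, ← map_add, ← map_add, ← map_add, ← map_add, ← heS q, hS,
      Fin.sum_univ_four]
    congr 1
    abel
  refine ⟨i, e, hcls, hdeg, ?_, ?_⟩
  · intro q r
    have hX : ∀ q, (X (i q) : MvPolynomial (Fin n) k) = monomial (Finsupp.single (i q) 1) 1 :=
      fun q => rfl
    rw [hX, hX, monomial_mul, monomial_mul, one_mul]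
    apply monomial_sub_mem
    have h : ∀ q, degHom (colSpan B) (e q) + degHom (colSpan B) S =
        topFiber B + degHom (colSpan B) (Finsupp.single (i q) 1) := fun q => by
      rw [← map_add, heS, map_add, degHom_corner]
    apply add_right_cancel (b := degHom (colSpan B) S)
    rw [map_add, map_add, add_assoc, add_assoc, h, h]
    abel
  · intro f hf hk
    have hM : (X (i 1) * X (i 2) * X (i 3) * monomial (e 0) 1 : MvPolynomial (Fin n) k) =
        monomial (Finsupp.single (i 1) 1 + Finsupp.single (i 2) 1 + Finsupp.single (i 3) 1 +
          e 0) 1 := by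
      simp only [X, monomial_mul, one_mul]
    have hMd : degHom (colSpan B) (Finsupp.single (i 1) 1 + Finsupp.single (i 2) 1 +
        Finsupp.single (i 3) 1 + e 0) = topFiber B := by
      apply add_right_cancel (b := degHom (colSpan B) (Finsupp.single (i 0) 1))
      rw [← hdeg 0]
      simp only [map_add]
      abel
    have h1 := eval_homPart_of_mem (colSpan B) (topFiber B) _ hf
    have hf0 : homPart (degHom (colSpan B)) (topFiber B) f = 0 := by
      ext u
      rw [coeff_homPart]
      split_ifs with hu
      · obtain ⟨q, hq⟩ := exists_missed_quadrant B hquad u hu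
        rw [← coeff_kill (quadrant B) q u hq f, hk q]
      · simp
    rw [homPart_sub, hf0, hM, homPart_eq_self, zero_sub, map_neg, eval_monomial] at h1
    · simp at h1
    · intro u hu
      rw [Finset.mem_singleton.1 (support_monomial_subset hu), hMd]

end Quadrants

/-- Proposition `prop:highSyzygyDegree`: let `B ∈ ℤ^{n×2}` have
rank 2, with `ℤB` positive and the rows of `B` meeting all four open quadrants of
`ℝ²`, and let `C∘` be the fiber of `ℤⁿ/ℤB` containing `(B₁)₊ + (B₂)₊`.  Then
`β_{3,C∘}(k[x]/I_{ℤB}) > 0` (in any minimal graded free resolution) and consequently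
`k[x]/I_{ℤB}` is not Cohen–Macaulay. -/
theorem statement7 (k : Type*) [Field k] {n : ℕ} (B : Matrix (Fin n) (Fin 2) ℤ)
    (hrank : B.rank = 2) (hpos : IsPositiveLattice (colSpan B))
    (hquad : MeetsFourQuadrants B)
    (σ : ℕ → Type) [∀ i, Fintype (σ i)]
    (deg : ∀ i, σ i → ((Fin n → ℤ) ⧸ colSpan B))
    (A : ∀ i, Matrix (σ i) (σ (i + 1)) (MvPolynomial (Fin n) k))
    (p : σ 0 → MvPolynomial (Fin n) k)
    (hres : IsMinimalGradedFreeResolution k (colSpan B) σ deg A p) :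
    0 < Nat.card {g : σ 3 // deg 3 g =
        Submodule.Quotient.mk fun i => max (B i 0) 0 + max (B i 1) 0} ∧
      ¬ IsCMLatticeQuotient k (colSpan B) := by
  obtain ⟨hfree, hp, hA, -⟩ := hres
  obtain ⟨i, e, hcls, hdeg, hI, hnot⟩ := exists_corner_data k B hquad
  constructor
  · obtain ⟨v0, hv0, hv1⟩ := exists_augmentation_hom (colSpan B) hpos (deg 0) p hp hfree.1
    obtain ⟨s, hs, g, hg⟩ := exists_top_syzygy (degHom (colSpan B)) (quadrant B) _ σ A p hfree
      deg hA (topFiber B) i hcls e hdeg hI v0 hv0 hv1 hnot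
    have h := hs g 0 (mem_support_iff.2 hg)
    rw [map_zero, zero_add] at h
    have : Nonempty {g : σ 3 // deg 3 g =
        Submodule.Quotient.mk fun i => max (B i 0) 0 + max (B i 1) 0} := ⟨⟨g, h⟩⟩
    exact Nat.card_pos
  · rintro ⟨τ, hfin, A', p', hempty, hres_tau⟩
    have hrk : latticeRank (colSpan B) = 2 := hrank
    have h3 : IsEmpty (τ 3) := hempty 3 (by rw [hrk]; norm_num)
    obtain ⟨v0, hv1⟩ := exists_augmentation _ p' hres_tau.1
    -- The trivial grading group makes every homogeneity condition vacuous.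
    obtain ⟨-, -, g, -⟩ := exists_top_syzygy (Γ := PUnit.{1}) 0 (quadrant B) _ τ A' p' hres_tau
      (fun _ _ => 0) (fun _ _ _ _ _ => rfl) 0 i hcls e (fun _ => rfl) hI v0
      (fun _ _ _ => rfl) hv1 hnot
    exact h3.elim g
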